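/- arXiv:1811.10928 — 8 statements merged into one kernel-verified Lean document; each statement's English description precedes it below -/
import Mathlib

section
/- Let A be a finite nonempty alphabet and π a policy over A. Let T ⊆ List A be a finite nonempty prefix-closed set with π(n) > 0 for every n ∈ T, and let c be a real number such that (|n| + 1) ≤ c · π(n) for every n ∈ T, where |n| denotes the length of n. Then the cardinality of T is at most c. (This is the combinatorial core of the Levin tree search bound: the number of node expansions of LevinTS before reaching a target set G is at most min over n ∈ G of (|n|+1)/π(n).) -/
/-!
For `n ∈ T` let `S n` be the set of nodes of `T` extending `n`. The bound is the case `n = []` of the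
stronger inequality `|S n| + |n| ≤ c * π n`, proved from the leaves of `T` upwards. At a leaf it is the
hypothesis on `c`. At an inner node with `k ≥ 1` children in `T`, summing the inequality over the
children gives `|S n| ≤ 1 + c * π n - k * (|n| + 1) ≤ c * π n - |n|`.
-/

open scoped Classical in
/-- The subtree inequality that makes the induction on the tree `T` work: the term `|n|` is what
a single child's share of the sum pays for when passing to the parent. The induction is on the
size of the subtree. -/
theorem levinTS_subtree_bound {A : Type*} [Fintype A]
    (π : List A → ℝ)
    (hnonneg : ∀ n : List A, 0 ≤ π n)
    (hsplit : ∀ n : List A, π n = ∑ a : A, π (n ++ [a]))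
    (T : Finset (List A))
    (hclosed : ∀ n ∈ T, ∀ m : List A, m <+: n → m ∈ T)
    (c : ℝ) (hc0 : 0 ≤ c)
    (hc : ∀ n ∈ T, ((n.length : ℝ) + 1) ≤ c * π n) :
    ∀ (k : ℕ) (n : List A), (T.filter (fun m => n <+: m)).card ≤ k → n ∈ T →
      ((T.filter (fun m => n <+: m)).card : ℝ) + n.length ≤ c * π n := by
  intro k
  induction k with
  | zero =>
    intro n hk hn
    have : n ∈ T.filter (fun m => n <+: m) := by simp [hn]
    have := Finset.card_pos.mpr ⟨n, this⟩
    omega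
  | succ k ih =>
    intro n hk hn
    have hsub : T.filter (fun m => n <+: m) ⊆
        insert n (Finset.univ.biUnion fun a : A => T.filter (fun m => n ++ [a] <+: m)) := by
      intro m hm
      obtain ⟨hmT, w, rfl⟩ := Finset.mem_filter.mp hm
      cases w with
      | nil => simp
      | cons a w =>
        refine Finset.mem_insert_of_mem (Finset.mem_biUnion.mpr ⟨a, Finset.mem_univ a, ?_⟩)
        exact Finset.mem_filter.mpr ⟨hmT, w, by simp⟩
    have hcard : (T.filter (fun m => n <+: m)).card ≤
        (∑ a : A, (T.filter (fun m => n ++ [a] <+: m)).card) + 1 :=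
      (Finset.card_le_card hsub).trans ((Finset.card_insert_le _ _).trans
        (Nat.add_le_add_right Finset.card_biUnion_le 1))
    have hcard' : ((T.filter (fun m => n <+: m)).card : ℝ) ≤
        (∑ a : A, ((T.filter (fun m => n ++ [a] <+: m)).card : ℝ)) + 1 := by
      exact_mod_cast hcard
    have hempty : ∀ a : A, n ++ [a] ∉ T → (T.filter (fun m => n ++ [a] <+: m)).card = 0 := by
      intro a ha
      rw [Finset.card_eq_zero, Finset.filter_eq_empty_iff]
      exact fun m hm hp => ha (hclosed m hm _ hp)
    by_cases hex : ∃ b : A, n ++ [b] ∈ T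
    · obtain ⟨b, hb⟩ := hex
      have hchild : ∀ a : A, ((T.filter (fun m => n ++ [a] <+: m)).card : ℝ) +
          (if n ++ [a] ∈ T then (n.length : ℝ) + 1 else 0) ≤ c * π (n ++ [a]) := by
        intro a
        split_ifs with ha
        · have hlt : (T.filter (fun m => n ++ [a] <+: m)).card <
              (T.filter (fun m => n <+: m)).card := by
            apply Finset.card_lt_card
            refine Finset.ssubset_iff_of_subset ?_ |>.mpr ⟨n, by simp [hn], ?_⟩
            · intro m hm
              rw [Finset.mem_filter] at hm ⊢
              exact ⟨hm.1, (List.prefix_append n [a]).trans hm.2⟩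
            · intro hm
              have := (Finset.mem_filter.mp hm).2.length_le
              simp at this
          have := ih (n ++ [a]) (by omega) ha
          simpa using this
        · rw [hempty a ha]
          simpa using mul_nonneg hc0 (hnonneg _)
      have hsum := Finset.sum_le_sum fun a (_ : a ∈ Finset.univ) => hchild a
      rw [Finset.sum_add_distrib, ← Finset.mul_sum, ← hsplit n] at hsum
      have hone : (n.length : ℝ) + 1 ≤
          ∑ a : A, (if n ++ [a] ∈ T then (n.length : ℝ) + 1 else 0) := by
        have := Finset.single_le_sum
          (f := fun a : A => if n ++ [a] ∈ T then (n.length : ℝ) + 1 else 0)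
          (fun a _ => by split_ifs <;> positivity) (Finset.mem_univ b)
        simpa [hb] using this
      linarith
    · push Not at hex
      have hz : ∑ a : A, ((T.filter (fun m => n ++ [a] <+: m)).card : ℝ) = 0 :=
        Finset.sum_eq_zero fun a _ => by rw [hempty a (hex a)]; simp
      have := hc n hn
      linarith

/-- The combinatorial core of the Levin tree search bound: for a policy `π` over a
finite nonempty alphabet `A`, a finite nonempty prefix-closed set `T` with `π n > 0`
on `T`, and a real `c` with `|n| + 1 ≤ c * π n` on `T`, the cardinality of `T` is
at most `c`. -/
theorem levinTS_card_bound {A : Type*} [Fintype A] [Nonempty A]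
    (π : List A → ℝ)
    (hroot : π [] = 1)
    (hnonneg : ∀ n : List A, 0 ≤ π n)
    (hsplit : ∀ n : List A, π n = ∑ a : A, π (n ++ [a]))
    (T : Finset (List A)) (hT : T.Nonempty)
    (hclosed : ∀ n ∈ T, ∀ m : List A, m <+: n → m ∈ T)
    (hpos : ∀ n ∈ T, 0 < π n)
    (c : ℝ)
    (hc : ∀ n ∈ T, ((n.length : ℝ) + 1) ≤ c * π n) :
    (T.card : ℝ) ≤ c := by
  classical
  obtain ⟨n, hn⟩ := hT
  have hnil : [] ∈ T := hclosed n hn [] List.nil_prefix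
  have hc1 := hc [] hnil
  simp only [List.length_nil, Nat.cast_zero, hroot] at hc1
  have h := levinTS_subtree_bound π hnonneg hsplit T hclosed c (by linarith) hc _ [] le_rfl hnil
  simpa [hroot] using h
end

section
/- Let A be a finite nonempty alphabet and π a policy over A. Let L ⊆ List A be a finite set that is prefix-free, i.e., no element of L is a proper prefix of another element of L. Then ∑_{n ∈ L} π(n) ≤ 1. -/
/-! The bound is proved in the form `∑ n ∈ L, π n ≤ π []` without normalising `π []`, so that
it can be applied to each subtree function `w ↦ π (a :: w)`, by induction on a bound for the
lengths of the words of `L`. If `[] ∈ L`, prefix-freeness forces `L = {[]}`. Otherwise `L` splits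
according to first letters into the prefix-free sets `{w | a :: w ∈ L}` of shorter words, and the
bounds `π [a]` for these add up to `π []`. -/

theorem sum_le_root_of_length_le {A : Type*} [Fintype A] (N : ℕ) :
    ∀ (π : List A → ℝ) (_ : ∀ n : List A, 0 ≤ π n)
      (_ : ∀ n : List A, π n = ∑ a : A, π (n ++ [a]))
      (L : Finset (List A))
      (_ : ∀ n ∈ L, ∀ m ∈ L, n <+: m → n = m)
      (_ : ∀ n ∈ L, n.length ≤ N),
      ∑ n ∈ L, π n ≤ π [] := by
  classical
  induction N with
  | zero =>
    intro π h0 _ L _ hN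
    have hL : L ⊆ {[]} := fun n hn => by
      simpa using hN n hn
    simpa using Finset.sum_le_sum_of_subset_of_nonneg hL (fun n _ _ => h0 n)
  | succ N ih =>
    intro π h0 hs L hpf hN
    by_cases hnil : [] ∈ L
    · have hL : L ⊆ {[]} := fun n hn => by
        simpa using (hpf [] hnil n hn List.nil_prefix).symm
      simpa using Finset.sum_le_sum_of_subset_of_nonneg hL (fun n _ _ => h0 n)
    · let T : A → Finset (List A) := fun a =>
        L.preimage (List.cons a) (List.cons_injective.injOn)
      have hT : ∀ a w, w ∈ T a ↔ a :: w ∈ L := fun a w => by simp [T]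
      have hsum : ∑ n ∈ L, π n = ∑ a : A, ∑ w ∈ T a, π (a :: w) := by
        rw [Finset.sum_sigma']
        symm
        refine Finset.sum_bij (fun x _ => x.1 :: x.2) ?_ ?_ ?_ ?_
        · rintro ⟨a, w⟩ h
          simpa [hT] using h
        · rintro ⟨a, w⟩ _ ⟨b, v⟩ _ h
          obtain ⟨rfl, rfl⟩ := List.cons.inj h
          rfl
        · intro n hn
          cases n with
          | nil => exact absurd hn hnil
          | cons a w => exact ⟨⟨a, w⟩, by simpa [hT] using hn, rfl⟩
        · intros
          rfl
      rw [hsum, hs []]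
      refine Finset.sum_le_sum fun a _ => ?_
      refine ih (fun w => π (a :: w)) (fun w => h0 _) (fun w => hs (a :: w)) (T a) ?_ ?_
      · intro n hn m hm h
        exact (List.cons.inj (hpf _ ((hT a n).1 hn) _ ((hT a m).1 hm)
          (List.cons_prefix_cons.2 ⟨rfl, h⟩))).2
      · intro n hn
        simpa using hN _ ((hT a n).1 hn)

/-- For a policy `π` over a finite nonempty alphabet `A` and a finite prefix-free
set `L` (no element is a proper prefix of another), `∑ n ∈ L, π n ≤ 1`. -/
theorem prefix_free_sum_le_one {A : Type*} [Fintype A] [Nonempty A]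
    (π : List A → ℝ)
    (hroot : π [] = 1)
    (hnonneg : ∀ n : List A, 0 ≤ π n)
    (hsplit : ∀ n : List A, π n = ∑ a : A, π (n ++ [a]))
    (L : Finset (List A))
    (hpf : ∀ n ∈ L, ∀ m ∈ L, n <+: m → n = m) :
    ∑ n ∈ L, π n ≤ 1 := by
  rw [← hroot]
  exact sum_le_root_of_length_le (L.sup List.length) π hnonneg hsplit L hpf
    (fun n hn => Finset.le_sup (f := List.length) hn)
end

section
/- Let A be a finite nonempty alphabet and π a policy over A. Let n₁, n₂ ∈ List A with π(n₁) > 0, π(n₂) > 0, π(n₁) ≥ π(n₂), and (|n₁| + 1)/π(n₁) ≤ (|n₂| + 1)/π(n₂). Let w ∈ List A be any continuation such that π(n₁ ++ w) > 0, π(n₂ ++ w) > 0, and the conditional probabilities agree: π(n₁ ++ w)/π(n₁) = π(n₂ ++ w)/π(n₂). Then (|n₁ ++ w| + 1)/π(n₁ ++ w) ≤ (|n₂ ++ w| + 1)/π(n₂ ++ w). (This is the key inequality showing that state cuts in Levin tree search with a Markovian policy preserve best-first order and lowest costs.) -/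
/-! Let `r` be the common conditional probability of `w`, so `π (nᵢ ++ w) = r * π nᵢ`. The cost of
`nᵢ ++ w` is then `((|nᵢ| + 1) / π nᵢ + |w| / π nᵢ) / r`. The first summand is ordered by the cost
hypothesis, the second by `π n₂ ≤ π n₁`, and dividing by `r > 0` preserves the order. -/

/-- The key inequality showing that state cuts in Levin tree search with a
Markovian policy preserve best-first order and lowest costs. -/
theorem state_cut_preserves_cost {A : Type*} [Fintype A] [Nonempty A]
    (π : List A → ℝ)
    (hroot : π [] = 1)
    (hnonneg : ∀ n : List A, 0 ≤ π n)
    (hsplit : ∀ n : List A, π n = ∑ a : A, π (n ++ [a]))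
    (n₁ n₂ w : List A)
    (h₁ : 0 < π n₁) (h₂ : 0 < π n₂)
    (hge : π n₂ ≤ π n₁)
    (hcost : ((n₁.length : ℝ) + 1) / π n₁ ≤ ((n₂.length : ℝ) + 1) / π n₂)
    (h₁w : 0 < π (n₁ ++ w)) (h₂w : 0 < π (n₂ ++ w))
    (hcond : π (n₁ ++ w) / π n₁ = π (n₂ ++ w) / π n₂) :
    (((n₁ ++ w).length : ℝ) + 1) / π (n₁ ++ w) ≤
      (((n₂ ++ w).length : ℝ) + 1) / π (n₂ ++ w) := by
  obtain ⟨r, hr⟩ : ∃ r, r = π (n₁ ++ w) / π n₁ := ⟨_, rfl⟩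
  have hrpos : 0 < r := hr ▸ div_pos h₁w h₁
  have e₁ : π (n₁ ++ w) = π n₁ * r := by rw [hr, mul_div_cancel₀ _ h₁.ne']
  have e₂ : π (n₂ ++ w) = π n₂ * r := by rw [hr, hcond, mul_div_cancel₀ _ h₂.ne']
  have hw : (w.length : ℝ) / π n₁ ≤ (w.length : ℝ) / π n₂ :=
    div_le_div_of_nonneg_left (Nat.cast_nonneg _) h₂ hge
  rw [e₁, e₂, ← div_div, ← div_div, List.length_append, List.length_append]
  push_cast
  refine div_le_div_of_nonneg_right ?_ hrpos.le
  rw [add_right_comm, add_right_comm (n₂.length : ℝ), add_div, add_div _ (w.length : ℝ)]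
  exact add_le_add hcost hw
end

section
/- Let f be the sequence A6519 and let t be a positive integer and q ∈ (0, 1] a real number; set γ = 1 − q. For n ≥ 1 define h(n) = q if f(n) ≥ t and h(n) = 0 otherwise, and define the expected running time of the universal restarting strategy as L = ∑_{n=1}^∞ (t · h(n) + (1 − h(n)) · f(n)) · ∏_{j=1}^{n−1} (1 − h(j)). Then L ≤ t + (t/q) · (log₂(t/q) + 6.1). Consequently, for a randomized program whose cumulative distribution of halting times is Q, the expected running time of the restarting strategy that runs the program for f(1), f(2), f(3), … steps is at most min over positive integers t of t + (t/Q(t)) · (log₂(t/Q(t)) + 6.1). -/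
/-!
Let `γ = 1 - q` and let `2 ^ k` be the least power of two that is at least `t`, so `2 ^ k ≤ 2 t`.
A run `n` can halt exactly when `2 ^ k ∣ n`, hence the survival probability before run `n + 1` is
`γ ^ ⌊n / 2 ^ k⌋`. Grouping the runs into blocks of length `2 ^ k` (`sum_blocks`, by splitting off
the odd indices `k` times) shows that `M` blocks cost
`∑_{m < M} γ ^ m (k 2 ^ k / 2 + t q) + 2 ^ k F_M(γ)`, where `F_M(γ) = ∑_{m=1}^{M} f(m) γ ^ m`.

The relation `f(2m) = 2 f(m)` gives `F_M(x) ≤ x / (1 - x²) + 2 F_M(x²)`. After `n` iterations every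
correction term contributes at most `1 / (2q)`, because `1 - γ ^ (2N) ≥ 2 N q γ ^ N` for `N` a power
of two, and so `q F_M(γ) ≤ n / 2 + q 2 ^ n F_M(γ ^ (2 ^ n))`. Choosing `1 / q ≤ 2 ^ n ≤ 2 / q` makes
`γ ^ (2 ^ n) ≤ 1 / e`, and `F_M(x) ≤ ∑ m x ^ m ≤ x / (1 - x)²` bounds the remainder. This yields
`2 q F_M(γ) ≤ log₂(1 / q) + 5.1`, and `k ≤ log₂ t + 1` gives the final bound.

All terms being nonnegative, it is enough to bound partial sums, so no infinite series has to be
rearranged.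
-/

/-- The sequence A6519: `f n` is the largest power of 2 dividing `n` (for `n ≥ 1`);
equivalently `f n = 1` if `n` is odd and `f n = 2 · f (n/2)` if `n` is even. -/
def A6519 (n : ℕ) : ℕ := 2 ^ (padicValNat 2 n)

lemma A6519_odd (l : ℕ) : A6519 (2 * l + 1) = 1 := by
  unfold A6519
  rw [padicValNat.eq_zero_of_not_dvd (by omega), pow_zero]

lemma A6519_even (l : ℕ) : A6519 (2 * (l + 1)) = 2 * A6519 (l + 1) := by
  unfold A6519
  rw [padicValNat.mul (by norm_num) (by omega), padicValNat.self (by norm_num)]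
  ring

lemma A6519_le (n : ℕ) : A6519 (n + 1) ≤ n + 1 :=
  Nat.le_of_dvd (by omega) pow_padicValNat_dvd

lemma le_A6519_iff (t n : ℕ) : t ≤ A6519 (n + 1) ↔ 2 ^ Nat.clog 2 t ∣ n + 1 := by
  unfold A6519
  rw [padicValNat_dvd_iff_le (by omega), Nat.clog_le_iff_le_pow (by norm_num)]

lemma sum_range_two_mul (a : ℕ → ℝ) (N : ℕ) :
    ∑ n ∈ Finset.range (2 * N), a n = ∑ l ∈ Finset.range N, (a (2 * l) + a (2 * l + 1)) := by
  induction N with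
  | zero => simp
  | succ N ih =>
    rw [show 2 * (N + 1) = 2 * N + 1 + 1 by ring, Finset.sum_range_succ, Finset.sum_range_succ, ih,
      Finset.sum_range_succ]
    ring

lemma sum_range_div (x : ℝ) (k M : ℕ) :
    ∑ n ∈ Finset.range (2 ^ k * M), x ^ (n / 2 ^ k) = 2 ^ k * ∑ m ∈ Finset.range M, x ^ m := by
  induction k with
  | zero => simp
  | succ k ih =>
    rw [show 2 ^ (k + 1) * M = 2 * (2 ^ k * M) by ring, sum_range_two_mul]
    have : ∀ l ∈ Finset.range (2 ^ k * M),
        x ^ (2 * l / 2 ^ (k + 1)) + x ^ ((2 * l + 1) / 2 ^ (k + 1)) = 2 * x ^ (l / 2 ^ k) := by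
      intro l _
      rw [pow_succ', ← Nat.div_div_eq_div_mul, ← Nat.div_div_eq_div_mul,
        show 2 * l / 2 = l by omega, show (2 * l + 1) / 2 = l by omega]
      ring
    rw [Finset.sum_congr rfl this, ← Finset.mul_sum, ih]
    ring

/-- The cost of the first `M` blocks of length `2 ^ k`, where a run that can halt costs
`a + γ c f(n)`, any other run costs `c f(n)`, and `γ ^ m` is the weight of block `m`. The free
scaling factor `c` makes the induction on `k` work: passing from the even indices to their halves
replaces `c` by `2 c`. -/
lemma sum_blocks (γ a : ℝ) (k M : ℕ) : ∀ c : ℝ,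
    ∑ n ∈ Finset.range (2 ^ k * M),
      (if 2 ^ k ∣ n + 1 then a + γ * (c * (A6519 (n + 1) : ℝ)) else c * (A6519 (n + 1) : ℝ)) *
        γ ^ (n / 2 ^ k)
    = c * k * 2 ^ k / 2 * ∑ m ∈ Finset.range M, γ ^ m +
      ∑ m ∈ Finset.range M, (a + γ * (c * 2 ^ k * (A6519 (m + 1) : ℝ))) * γ ^ m := by
  induction k with
  | zero => intro c; simp
  | succ k ih =>
    intro c
    rw [show 2 ^ (k + 1) * M = 2 * (2 ^ k * M) by ring, sum_range_two_mul, Finset.sum_add_distrib]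
    have h1 : ∀ l ∈ Finset.range (2 ^ k * M),
        (if 2 ^ (k + 1) ∣ 2 * l + 1 then a + γ * (c * (A6519 (2 * l + 1) : ℝ))
          else c * (A6519 (2 * l + 1) : ℝ)) * γ ^ (2 * l / 2 ^ (k + 1)) =
        c * γ ^ (l / 2 ^ k) := by
      intro l _
      have hd : ¬ 2 ^ (k + 1) ∣ 2 * l + 1 := by
        intro hd
        have : 2 ∣ 2 * l + 1 := (dvd_pow_self 2 (by omega)).trans hd
        omega
      rw [if_neg hd, A6519_odd, pow_succ', ← Nat.div_div_eq_div_mul, show 2 * l / 2 = l by omega]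
      simp
    have h2 : ∀ l ∈ Finset.range (2 ^ k * M),
        (if 2 ^ (k + 1) ∣ 2 * l + 1 + 1 then a + γ * (c * (A6519 (2 * l + 1 + 1) : ℝ))
          else c * (A6519 (2 * l + 1 + 1) : ℝ)) * γ ^ ((2 * l + 1) / 2 ^ (k + 1)) =
        (if 2 ^ k ∣ l + 1 then a + γ * ((2 * c) * (A6519 (l + 1) : ℝ))
          else (2 * c) * (A6519 (l + 1) : ℝ)) * γ ^ (l / 2 ^ k) := by
      intro l _
      rw [show 2 * l + 1 + 1 = 2 * (l + 1) by ring, A6519_even, pow_succ',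
        ← Nat.div_div_eq_div_mul, show (2 * l + 1) / 2 = l by omega]
      simp only [Nat.mul_dvd_mul_iff_left (show 0 < 2 by norm_num)]
      push_cast
      split_ifs <;> ring
    rw [Finset.sum_congr rfl h1, Finset.sum_congr rfl h2, ih, ← Finset.mul_sum, sum_range_div]
    have h3 : ∀ m : ℕ, 2 * c * 2 ^ k * (A6519 (m + 1) : ℝ) =
        c * 2 ^ (k + 1) * (A6519 (m + 1) : ℝ) := fun m => by ring
    simp only [h3]
    push_cast
    ring

/-- The truncated generating function `∑_{m=1}^{M} f(m) x ^ m`. -/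
noncomputable def genF (M : ℕ) (x : ℝ) : ℝ :=
  ∑ m ∈ Finset.range M, (A6519 (m + 1) : ℝ) * x ^ (m + 1)

lemma geom_sum_le_inv {x : ℝ} (h0 : 0 ≤ x) (h1 : x < 1) (M : ℕ) :
    ∑ m ∈ Finset.range M, x ^ m ≤ 1 / (1 - x) := by
  rw [le_div_iff₀ (by linarith), geom_sum_mul_neg]
  linarith [pow_nonneg h0 M]

lemma genF_le_step {x : ℝ} (h0 : 0 ≤ x) (h1 : x < 1) (M : ℕ) :
    genF M x ≤ x / (1 - x ^ 2) + 2 * genF M (x ^ 2) := by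
  have hmono : genF M x ≤ genF (2 * M) x := by
    unfold genF
    apply Finset.sum_le_sum_of_subset_of_nonneg
    · exact Finset.range_mono (by omega)
    · intros; positivity
  have hsplit : genF (2 * M) x =
      x * ∑ l ∈ Finset.range M, (x ^ 2) ^ l + 2 * genF M (x ^ 2) := by
    unfold genF
    rw [sum_range_two_mul, Finset.mul_sum, Finset.mul_sum, ← Finset.sum_add_distrib]
    refine Finset.sum_congr rfl fun l _ => ?_
    rw [A6519_odd, show 2 * l + 1 + 1 = 2 * (l + 1) by ring, A6519_even, ← pow_mul, ← pow_mul]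
    push_cast
    ring
  have hg := geom_sum_le_inv (x := x ^ 2) (by positivity) (by nlinarith) M
  have := mul_le_mul_of_nonneg_left hg h0
  rw [mul_one_div] at this
  linarith

lemma genF_le {x : ℝ} (h0 : 0 ≤ x) (h1 : x < 1) (M : ℕ) : genF M x ≤ x / (1 - x) ^ 2 := by
  have hs := hasSum_coe_mul_geometric_of_norm_lt_one (𝕜 := ℝ) (r := x)
    (by rwa [Real.norm_of_nonneg h0])
  have h2 := sum_le_hasSum (Finset.range (M + 1)) (fun i _ => by positivity) hs
  refine le_trans ?_ h2
  rw [Finset.sum_range_succ']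
  simp only [Nat.cast_zero, zero_mul, add_zero]
  unfold genF
  refine Finset.sum_le_sum fun m _ => ?_
  have : (A6519 (m + 1) : ℝ) ≤ ((m + 1 : ℕ) : ℝ) := by exact_mod_cast A6519_le m
  gcongr

/-- With `y = x ^ 2 ^ n`, this says that `y / (1 - y²)`, the correction term of `genF_le_step` at
`y`, is at most `1 / (2 (1 - x) 2 ^ n)`. The doubling step is `1 + y² ≥ 2 y`. -/
lemma pow_gap {x : ℝ} (h0 : 0 ≤ x) (h1 : x < 1) (n : ℕ) :
    2 * ((1 - x) * 2 ^ n * x ^ 2 ^ n) ≤ 1 - (x ^ 2 ^ n) ^ 2 := by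
  induction n with
  | zero => simp; nlinarith
  | succ n ih =>
    rw [pow_succ (2 : ℝ) n, pow_succ (2 : ℕ) n, pow_mul x]
    set y := x ^ 2 ^ n
    have hy : 0 ≤ y := by positivity
    have hc : 0 ≤ (1 - x) * 2 ^ n * y := by
      have : 0 ≤ 1 - x := by linarith
      positivity
    calc 2 * ((1 - x) * (2 ^ n * 2) * y ^ 2) = 2 * ((1 - x) * 2 ^ n * y) * (2 * y) := by ring
      _ ≤ 2 * ((1 - x) * 2 ^ n * y) * (1 + y ^ 2) := by
          gcongr
          nlinarith [sq_nonneg (1 - y)]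
      _ ≤ (1 - y ^ 2) * (1 + y ^ 2) := by gcongr
      _ = 1 - (y ^ 2) ^ 2 := by ring

/-- The `n`-fold iterate of `genF_le_step`: each iteration costs `1 / 2`, uniformly in `x`. -/
lemma genF_iterate {x : ℝ} (h0 : 0 ≤ x) (h1 : x < 1) (M n : ℕ) :
    (1 - x) * genF M x ≤ n / 2 + (1 - x) * 2 ^ n * genF M (x ^ 2 ^ n) := by
  induction n with
  | zero => simp
  | succ n ih =>
    have hy : 0 ≤ x ^ 2 ^ n := by positivity
    have hy1 : x ^ 2 ^ n < 1 := pow_lt_one₀ h0 h1 (by positivity)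
    have hs := genF_le_step hy hy1 M
    have hgap := pow_gap h0 h1 n
    rw [pow_succ (2 : ℝ) n, pow_succ (2 : ℕ) n, pow_mul x]
    set y := x ^ 2 ^ n
    have hq : 0 ≤ (1 - x) * 2 ^ n := by
      have : 0 ≤ 1 - x := by linarith
      positivity
    have hterm : (1 - x) * 2 ^ n * (y / (1 - y ^ 2)) ≤ 1 / 2 := by
      rw [← mul_div_assoc, div_le_iff₀ (by nlinarith)]
      linarith
    have := mul_le_mul_of_nonneg_left hs hq
    push_cast
    linarith

/-- The constant `5.1` exceeds `1 + 2 · 2 · 0.94`: one unit for rounding `log₂ (1 / q)` up, and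
`2 q 2 ^ n F_M(y)` with `q 2 ^ n ≤ 2` and `F_M(y) ≤ 0.94` for `y ≤ 0.37`. -/
lemma genF_bound {q : ℝ} (hq0 : 0 < q) (hq1 : q ≤ 1) (M : ℕ) :
    2 * (q * genF M (1 - q)) ≤ Real.logb 2 (1 / q) + 5.1 := by
  -- `q 2 ^ n ≥ 1` makes `(1 - q) ^ 2 ^ n ≤ 1 / e`; `q 2 ^ n ≤ 2` controls the prefactor.
  obtain ⟨n, hn1, hn2⟩ : ∃ n : ℕ, 1 ≤ q * 2 ^ n ∧ q * 2 ^ n ≤ 2 := by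
    obtain ⟨n, h1, h2⟩ := exists_nat_pow_near (x := 1 / q) (y := 2)
      (by rw [le_div_iff₀ hq0]; linarith) (by norm_num)
    rw [le_div_iff₀ hq0] at h1
    rw [div_lt_iff₀ hq0] at h2
    refine ⟨n + 1, by linarith, ?_⟩
    rw [pow_succ]
    linarith
  have hnlog : (n : ℝ) ≤ Real.logb 2 (1 / q) + 1 := by
    have : (2 : ℝ) ^ n ≤ 2 * (1 / q) := by
      rw [mul_one_div, le_div_iff₀ hq0]; linarith
    have h3 := Real.logb_le_logb_of_le (b := 2) (by norm_num) (by positivity) this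
    rw [Real.logb_mul (by norm_num) (by positivity), Real.logb_pow,
      Real.logb_self_eq_one (by norm_num)] at h3
    linarith
  have hx0 : 0 ≤ 1 - q := by linarith
  have hx1 : 1 - q < 1 := by linarith
  have hit := genF_iterate hx0 hx1 M n
  have hy : 0 ≤ (1 - q) ^ 2 ^ n := by positivity
  have hye : (1 - q) ^ 2 ^ n ≤ 0.37 := by
    have h1 : (1 - q) ^ 2 ^ n ≤ Real.exp (-q) ^ 2 ^ n := by
      gcongr
      linarith [Real.add_one_le_exp (-q)]
    rw [← Real.exp_nat_mul] at h1
    have h2 : Real.exp (((2 ^ n : ℕ) : ℝ) * -q) ≤ Real.exp (-1) := by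
      apply Real.exp_le_exp.mpr
      push_cast
      linarith
    have h3 := Real.exp_neg_one_lt_d9
    norm_num at h3 ⊢
    linarith
  have hF := genF_le hy (by linarith) M
  have hF2 : genF M ((1 - q) ^ 2 ^ n) ≤ 0.94 := by
    refine hF.trans ?_
    generalize (1 - q) ^ 2 ^ n = y at *
    rw [div_le_iff₀ (by nlinarith)]
    nlinarith
  have : q * 2 ^ n * genF M ((1 - q) ^ 2 ^ n) ≤ 2 * 0.94 := by
    have hnn : 0 ≤ q * 2 ^ n := by positivity
    nlinarith
  rw [sub_sub_cancel] at hit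
  norm_num at this ⊢
  norm_num at hnlog
  linarith

/-- The sequence of survival factors: a factor `γ` occurs at each multiple of `N`. -/
lemma prod_eq_pow_div (γ : ℝ) (N n : ℕ) :
    ∏ j ∈ Finset.range n, (if N ∣ j + 1 then γ else 1) = γ ^ (n / N) := by
  induction n with
  | zero => simp
  | succ n ih =>
    rw [Finset.prod_range_succ, ih, Nat.succ_div]
    split_ifs <;> simp [pow_succ]

/-- The expected running time of the universal restarting strategy based on the
sequence A6519 is bounded by `t + (t/q) · (log₂(t/q) + 6.1)`, where the program
halts with probability `q` on any run allowed at least `t` steps. -/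
theorem lubyTS_expected_runtime (t : ℕ) (ht : 0 < t)
    (q : ℝ) (hq0 : 0 < q) (hq1 : q ≤ 1)
    (h : ℕ → ℝ) (hdef : ∀ n : ℕ, h n = if t ≤ A6519 n then q else 0) :
    ∑' n : ℕ,
        ((t : ℝ) * h (n + 1) + (1 - h (n + 1)) * (A6519 (n + 1) : ℝ)) *
          ∏ j ∈ Finset.range n, (1 - h (j + 1))
      ≤ (t : ℝ) + ((t : ℝ) / q) * (Real.logb 2 ((t : ℝ) / q) + 6.1) := by
  set k := Nat.clog 2 t with hk
  have hγ : 0 ≤ 1 - q := by linarith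
  have hterm : ∀ n : ℕ,
      ((t : ℝ) * h (n + 1) + (1 - h (n + 1)) * (A6519 (n + 1) : ℝ)) *
          ∏ j ∈ Finset.range n, (1 - h (j + 1)) =
      (if 2 ^ k ∣ n + 1 then (t : ℝ) * q + (1 - q) * (1 * (A6519 (n + 1) : ℝ))
        else 1 * (A6519 (n + 1) : ℝ)) * (1 - q) ^ (n / 2 ^ k) := by
    intro n
    rw [← prod_eq_pow_div]
    congr 1
    · simp only [hdef, le_A6519_iff, ← hk]
      split_ifs <;> ring
    · refine Finset.prod_congr rfl fun j _ => ?_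
      simp only [hdef, le_A6519_iff, ← hk]
      split_ifs <;> ring
  simp only [hterm]
  have hnn : ∀ n : ℕ, 0 ≤
      (if 2 ^ k ∣ n + 1 then (t : ℝ) * q + (1 - q) * (1 * (A6519 (n + 1) : ℝ))
        else 1 * (A6519 (n + 1) : ℝ)) * (1 - q) ^ (n / 2 ^ k) := by
    intro n
    split_ifs <;> positivity
  refine Real.tsum_le_of_sum_range_le hnn fun M => ?_
  have hM : M ≤ 2 ^ k * M := Nat.le_mul_of_pos_left M (by positivity)
  refine (Finset.sum_le_sum_of_subset_of_nonneg (Finset.range_mono hM)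
    (fun i _ _ => hnn i)).trans ?_
  rw [sum_blocks]
  have hS : ∑ m ∈ Finset.range M,
      ((t : ℝ) * q + (1 - q) * (1 * 2 ^ k * (A6519 (m + 1) : ℝ))) * (1 - q) ^ m =
      (t : ℝ) * q * ∑ m ∈ Finset.range M, (1 - q) ^ m + 2 ^ k * genF M (1 - q) := by
    unfold genF
    rw [Finset.mul_sum, Finset.mul_sum, ← Finset.sum_add_distrib]
    refine Finset.sum_congr rfl fun m _ => ?_
    ring
  rw [hS]
  have hA := geom_sum_le_inv hγ (by linarith) M
  rw [sub_sub_cancel] at hA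
  have hF := genF_bound hq0 hq1 M
  have htR : (0 : ℝ) < t := by exact_mod_cast ht
  have hkt : (2 : ℝ) ^ k ≤ 2 * t := by
    have : 2 ^ k ≤ 2 * t := by
      rcases Nat.lt_or_ge 1 t with h1 | h1
      · have h2 := Nat.pow_pred_clog_lt_self (b := 2) (by norm_num) h1
        have h3 : 0 < k := Nat.clog_pos (by norm_num) h1
        rw [← hk] at h2
        obtain ⟨j, hj⟩ : ∃ j, k = j + 1 := ⟨k - 1, by omega⟩
        rw [hj] at h2 ⊢
        simp only [Nat.pred_eq_sub_one, Nat.add_sub_cancel] at h2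
        rw [pow_succ]
        omega
      · have : t = 1 := by omega
        subst this
        simp [hk]
    exact_mod_cast this
  have hklog : (k : ℝ) ≤ Real.logb 2 t + 1 := by
    have h3 := Real.logb_le_logb_of_le (b := 2) (by norm_num) (by positivity) hkt
    rw [Real.logb_mul (by norm_num) (by positivity), Real.logb_pow,
      Real.logb_self_eq_one (by norm_num)] at h3
    linarith
  have hlog : Real.logb 2 ((t : ℝ) / q) = Real.logb 2 t + Real.logb 2 (1 / q) := by
    rw [← Real.logb_mul (by positivity) (by positivity), mul_one_div]
  have hlq : 0 ≤ Real.logb 2 (1 / q) :=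
    Real.logb_nonneg (by norm_num) (by rw [le_div_iff₀ hq0]; linarith)
  rw [hlog]
  set B := Real.logb 2 (1 / q)
  set T := Real.logb 2 (t : ℝ)
  set G := genF M (1 - q)
  have h1 : (2 : ℝ) ^ k / 2 * (k + 2 * (q * G)) ≤ t * (T + B + 6.1) := by
    have hk0 : (0 : ℝ) ≤ k := by positivity
    calc (2 : ℝ) ^ k / 2 * (k + 2 * (q * G)) ≤ 2 ^ k / 2 * (k + (B + 5.1)) := by gcongr
      _ ≤ t * (k + (B + 5.1)) := by
          gcongr
          linarith
      _ ≤ t * (T + B + 6.1) := by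
          refine mul_le_mul_of_nonneg_left ?_ htR.le
          norm_num
          linarith
  calc 1 * (k : ℝ) * 2 ^ k / 2 * ∑ m ∈ Finset.range M, (1 - q) ^ m +
        ((t : ℝ) * q * ∑ m ∈ Finset.range M, (1 - q) ^ m + 2 ^ k * G)
      ≤ 1 * (k : ℝ) * 2 ^ k / 2 * (1 / q) + ((t : ℝ) * q * (1 / q) + 2 ^ k * G) := by gcongr
    _ = t + (1 / q) * ((2 : ℝ) ^ k / 2 * (k + 2 * (q * G))) := by
        field_simp
        ring
    _ ≤ t + (1 / q) * (t * (T + B + 6.1)) := by gcongr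
    _ = t + t / q * (T + B + 6.1) := by ring
end

section
/- For every real γ with 0 < γ < 1, ∑_{n=0}^∞ 2^n · γ^{2^n} ≤ (1 / ln(1/γ)) · (1/e + γ / ln 2). -/
/-!
Put `L = log (1 / γ)` and `g t = t * exp (-t)`. After multiplication by `L`, the `n`-th term of the
series is `g (2 ^ n * L)`, so the claim is `∑ g (2 ^ n * L) ≤ 1 / e + G L` with
`G t = exp (-t) / log 2`. Here `G t - G (2 * t)` is the integral of `s ↦ g (2 ^ s * t)` over
`[0, 1]`, so this is the comparison of a sum of values of a unimodal function with its integral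
plus its maximum `1 / e`.

The integral is replaced by two elementary inequalities which meet at the point `t = log 2`, where
`g t = g (2 * t)`: for `t ≤ log 2` the left endpoint value satisfies `g t ≤ G t - G (2 * t)`
(`left_le`), and for `t ≥ log 2` the right endpoint value satisfies `g (2 * t) ≤ G t - G (2 * t)`
(`right_le`). Telescoping along the dyadic sequence, only the first term with argument beyond
`log 2` is not absorbed, and it is at most `1 / e`.
-/

lemma left_le {t : ℝ} (h0 : 0 ≤ t) (ht : t ≤ Real.log 2) :
    t * Real.exp (-t) ≤ Real.exp (-t) / Real.log 2 - Real.exp (-(2 * t)) / Real.log 2 := by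
  have hl := Real.log_two_lt_d9
  have hp : 0 < Real.log 2 := Real.log_pos (by norm_num)
  have hq := Real.quadratic_le_exp_of_nonneg h0
  have hE : Real.exp (-t) * Real.exp t = 1 := by rw [← Real.exp_add]; simp
  have h2 : Real.exp (-(2 * t)) = Real.exp (-t) * Real.exp (-t) := by
    rw [← Real.exp_add]; ring_nf
  have hpos := Real.exp_pos (-t)
  -- `exp (-t) ≤ 1 / (1 + t + t ^ 2 / 2)` is sharp enough on `[0, log 2]`.
  have key : Real.log 2 * t ≤ 1 - Real.exp (-t) := by
    have hc : Real.log 2 * t ≤ 0.6931471808 * t := by gcongr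
    have h3 : Real.exp (-t) * (1 + t + t ^ 2 / 2) ≤ 1 := by
      exact (mul_le_mul_of_nonneg_left hq hpos.le).trans hE.le
    have h4 : 1 ≤ (1 - 0.6931471808 * t) * (1 + t + t ^ 2 / 2) := by
      have : 0 ≤ t * (0.3068528192 - 0.1931471808 * t - 0.3465735904 * t ^ 2) := by
        apply mul_nonneg h0
        nlinarith
      nlinarith
    have h5 : Real.exp (-t) ≤ 1 - 0.6931471808 * t := by
      have : 0 < 1 + t + t ^ 2 / 2 := by positivity
      exact le_of_mul_le_mul_right (h3.trans h4) this
    linarith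
  rw [← sub_div, le_div_iff₀ hp, h2]
  nlinarith [mul_le_mul_of_nonneg_left key hpos.le]

lemma right_le {t : ℝ} (ht : Real.log 2 ≤ t) :
    2 * t * Real.exp (-(2 * t)) ≤
      Real.exp (-t) / Real.log 2 - Real.exp (-(2 * t)) / Real.log 2 := by
  have hl := Real.log_two_lt_d9
  have hp : 0 < Real.log 2 := Real.log_pos (by norm_num)
  have h1 : Real.exp (-t) = Real.exp (-(2 * t)) * Real.exp t := by
    rw [← Real.exp_add]; ring_nf
  -- The tangent line to `exp` at `log 2`.
  have htan : 2 * (t - Real.log 2 + 1) ≤ Real.exp t := by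
    have h := Real.add_one_le_exp (t - Real.log 2)
    rw [Real.exp_sub, Real.exp_log (by norm_num)] at h
    linarith
  -- At `t = log 2` the remaining inequality reads `2 * (log 2) ^ 2 ≤ 1`.
  have key : 2 * t * Real.log 2 ≤ Real.exp t - 1 := by
    nlinarith [mul_nonneg (sub_nonneg.2 ht) (by linarith : (0 : ℝ) ≤ 1 - Real.log 2)]
  rw [← sub_div, le_div_iff₀ hp, h1]
  nlinarith [mul_le_mul_of_nonneg_left key (Real.exp_pos (-(2 * t))).le]

/-- Beyond `log 2` the sum without its first term is bounded by the telescoping terms alone. -/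
lemma sum_tail_le (N : ℕ) : ∀ t : ℝ, Real.log 2 ≤ t →
    ∑ n ∈ Finset.range N, (2 ^ n * (2 * t)) * Real.exp (-(2 ^ n * (2 * t))) ≤
      Real.exp (-t) / Real.log 2 := by
  have hp : 0 < Real.log 2 := Real.log_pos (by norm_num)
  induction N with
  | zero => intro t _; simp; positivity
  | succ N ih =>
    intro t ht
    rw [Finset.sum_range_succ']
    have h := ih (2 * t) (by linarith)
    have h' := right_le ht
    simp only [pow_succ, pow_zero, one_mul, mul_assoc] at h h' ⊢
    linarith

lemma sum_dyadic_le (N : ℕ) : ∀ t : ℝ, 0 ≤ t →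
    ∑ n ∈ Finset.range N, (2 ^ n * t) * Real.exp (-(2 ^ n * t)) ≤
      1 / Real.exp 1 + Real.exp (-t) / Real.log 2 := by
  have hp : 0 < Real.log 2 := Real.log_pos (by norm_num)
  induction N with
  | zero => intro t _; simp; positivity
  | succ N ih =>
    intro t h0
    rw [Finset.sum_range_succ']
    rcases le_total t (Real.log 2) with ht | ht
    · have h := ih (2 * t) (by linarith)
      have h' := left_le h0 ht
      simp only [pow_succ, pow_zero, one_mul, mul_assoc] at h h' ⊢
      linarith
    · have h := sum_tail_le N t ht
      have h' : t * Real.exp (-t) ≤ 1 / Real.exp 1 := by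
        rw [one_div, ← Real.exp_neg]
        calc t * Real.exp (-t) ≤ Real.exp (t - 1) * Real.exp (-t) := by
              gcongr
              linarith [Real.add_one_le_exp (t - 1)]
          _ = Real.exp (-1) := by rw [← Real.exp_add]; ring_nf
      simp only [pow_succ, pow_zero, one_mul, mul_assoc] at h h' ⊢
      linarith

/-- For `0 < γ < 1`, `∑_{n=0}^∞ 2^n · γ^{2^n} ≤ (1/ln(1/γ)) · (1/e + γ/ln 2)`. -/
theorem sum_two_pow_gamma_two_pow (γ : ℝ) (h0 : 0 < γ) (h1 : γ < 1) :
    ∑' n : ℕ, (2 ^ n : ℝ) * γ ^ (2 ^ n) ≤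
      (1 / Real.log (1 / γ)) * (1 / Real.exp 1 + γ / Real.log 2) := by
  have hL : 0 < Real.log (1 / γ) := Real.log_pos (by rw [lt_div_iff₀ h0]; linarith)
  have hγ : Real.exp (-Real.log (1 / γ)) = γ := by
    rw [one_div, Real.log_inv, neg_neg, Real.exp_log h0]
  generalize Real.log (1 / γ) = L at hL hγ ⊢
  apply Real.tsum_le_of_sum_range_le (fun n => by positivity)
  intro N
  have h := sum_dyadic_le N L hL.le
  rw [hγ] at h
  rw [one_div_mul_eq_div, le_div_iff₀ hL, Finset.sum_mul]
  refine le_trans (le_of_eq (Finset.sum_congr rfl fun n _ => ?_)) h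
  have hn : γ ^ (2 ^ n) = Real.exp (-(2 ^ n * L)) := by
    rw [← hγ, ← Real.exp_nat_mul]
    push_cast
    ring_nf
  rw [hn]
  ring
end

section
/- For every real γ with 1/2 ≤ γ < 1, ∑_{n=0}^∞ γ^{2^n} ≤ log₂(1 / ln(1/γ)) + log₂(ln 16). -/
/-!
Squaring `γ` doubles `log (1 / γ)`, so it lowers the right-hand side by exactly `1`, while it
removes from the series its first term `γ ≤ 1`. Hence the bound for `γ ^ 2` implies the bound for
`γ`, and it is enough to treat `1 / 2 ≤ γ` with `γ ^ 2 ≤ 1 / 2`. There the right-hand side is at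
least `log₂ 4 = 2`, and comparing the exponents `2 ^ n` with `n + 1` bounds the series after its
first term by `∑ (γ ^ 2) ^ (n + 1) ≤ 1`. Every `γ` in `[1 / 2, 1)` reaches this range after
finitely many squarings.
-/

lemma summable_pow_two_pow {γ : ℝ} (h0 : 0 ≤ γ) (h1 : γ < 1) :
    Summable fun n : ℕ => γ ^ (2 ^ n) :=
  Summable.of_nonneg_of_le (fun _ => by positivity)
    (fun n => pow_le_pow_of_le_one h0 h1.le Nat.lt_two_pow_self.le)
    (summable_geometric_of_lt_one h0 h1)

lemma tsum_pow_two_pow_eq {γ : ℝ} (h0 : 0 ≤ γ) (h1 : γ < 1) :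
    ∑' n : ℕ, γ ^ (2 ^ n) = γ + ∑' n : ℕ, (γ ^ 2) ^ (2 ^ n) := by
  rw [(summable_pow_two_pow h0 h1).tsum_eq_zero_add]
  simp only [pow_zero, pow_one, ← pow_mul, pow_succ' 2]

lemma tsum_pow_two_pow_le_one {u : ℝ} (h0 : 0 ≤ u) (h1 : u ≤ 1 / 2) :
    ∑' n : ℕ, u ^ (2 ^ n) ≤ 1 := by
  have hu : u < 1 := by linarith
  have hs : Summable fun n : ℕ => u * u ^ n := (summable_geometric_of_lt_one h0 hu).mul_left u
  calc ∑' n : ℕ, u ^ (2 ^ n) ≤ ∑' n : ℕ, u * u ^ n :=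
        (summable_pow_two_pow h0 hu).tsum_le_tsum (fun n => by
          rw [← pow_succ']
          exact pow_le_pow_of_le_one h0 hu.le Nat.lt_two_pow_self) hs
    _ = u / (1 - u) := by rw [tsum_mul_left, tsum_geometric_of_lt_one h0 hu, div_eq_mul_inv]
    _ ≤ 1 := by rw [div_le_one (by linarith)]; linarith

lemma two_le_bound {γ : ℝ} (h0 : 1 / 2 ≤ γ) (h1 : γ < 1) :
    2 ≤ Real.logb 2 (1 / Real.log (1 / γ)) + Real.logb 2 (Real.log 16) := by
  have hL : 0 < Real.log (1 / γ) :=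
    Real.log_pos (by rw [lt_div_iff₀ (by linarith)]; linarith)
  have hle : Real.log (1 / γ) ≤ Real.log 2 :=
    Real.log_le_log (by have : 0 < γ := by linarith
                        positivity) (by rw [div_le_iff₀ (by linarith)]; linarith)
  have h16 : Real.log 16 = 4 * Real.log 2 := by
    rw [show (16 : ℝ) = 2 ^ 4 by norm_num, Real.log_pow]; norm_num
  have h2 : 0 < Real.log 2 := Real.log_pos one_lt_two
  rw [← Real.logb_mul (by positivity) (by rw [h16]; positivity), h16,
    Real.le_logb_iff_rpow_le one_lt_two (by positivity), one_div_mul_eq_div, le_div_iff₀ hL]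
  norm_num
  simp only [one_div, Real.log_inv] at hle
  linarith

lemma bound_sq {γ : ℝ} (h0 : 0 < γ) (h1 : γ < 1) :
    Real.logb 2 (1 / Real.log (1 / γ ^ 2)) = Real.logb 2 (1 / Real.log (1 / γ)) - 1 := by
  have hL : Real.log γ ≠ 0 := (Real.log_neg h0 h1).ne
  simp only [one_div, Real.log_inv, Real.log_pow, Real.logb_inv, Real.logb_neg_eq_logb]
  rw [Real.logb_mul (by norm_num) hL]
  norm_num
  ring

/-- The bound for those `γ` that fall to `1 / 2` or below after at most `k + 1` squarings. -/
lemma bound_of_pow_le (k : ℕ) : ∀ γ : ℝ, 1 / 2 ≤ γ → γ < 1 → γ ^ (2 ^ (k + 1)) ≤ 1 / 2 →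
    ∑' n : ℕ, γ ^ (2 ^ n) ≤
      Real.logb 2 (1 / Real.log (1 / γ)) + Real.logb 2 (Real.log 16) := by
  have base : ∀ γ : ℝ, 1 / 2 ≤ γ → γ < 1 → γ ^ 2 ≤ 1 / 2 → ∑' n : ℕ, γ ^ (2 ^ n) ≤
      Real.logb 2 (1 / Real.log (1 / γ)) + Real.logb 2 (Real.log 16) := by
    intro γ h0 h1 h
    have h2 := tsum_pow_two_pow_le_one (sq_nonneg γ) h
    have h3 := two_le_bound h0 h1
    rw [tsum_pow_two_pow_eq (by linarith) h1]
    linarith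
  induction k with
  | zero => simpa using base
  | succ k ih =>
    intro γ h0 h1 h
    rcases le_total (γ ^ 2) (1 / 2) with hγ | hγ
    · exact base γ h0 h1 hγ
    · have h2 := ih (γ ^ 2) hγ (by nlinarith) (by rwa [← pow_mul, ← pow_succ'])
      rw [bound_sq (by linarith) h1] at h2
      rw [tsum_pow_two_pow_eq (by linarith) h1]
      linarith

/-- For `1/2 ≤ γ < 1`, `∑_{n=0}^∞ γ^{2^n} ≤ log₂(1/ln(1/γ)) + log₂(ln 16)`. -/
theorem sum_gamma_two_pow (γ : ℝ) (h0 : 1 / 2 ≤ γ) (h1 : γ < 1) :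
    ∑' n : ℕ, γ ^ (2 ^ n) ≤
      Real.logb 2 (1 / Real.log (1 / γ)) + Real.logb 2 (Real.log 16) := by
  obtain ⟨k, hk⟩ := exists_pow_lt_of_lt_one (by norm_num : (0 : ℝ) < 1 / 2) h1
  refine bound_of_pow_le k γ h0 h1 (le_trans ?_ hk.le)
  exact pow_le_pow_of_le_one (by linarith) h1.le
    ((Nat.le_succ k).trans Nat.lt_two_pow_self.le)
end

section
/- For every real γ with 0 ≤ γ < 1 and every real a ≥ 1, 1/(1 − γ^a) ≤ 1 + (1/a) · γ/(1 − γ). -/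
/-! Subtracting `1`, the claim is `x / (1 - x) ≤ γ / (a (1 - γ))` with `x = γ ^ a`, i.e.
`a x (1 - γ) ≤ γ (1 - x)`. For `γ > 0` this is Bernoulli's inequality
`1 + a (γ⁻¹ - 1) ≤ (γ⁻¹) ^ a = x⁻¹` multiplied by `x γ`. -/

/-- For `0 ≤ γ < 1` and real `a ≥ 1`, `1/(1 − γ^a) ≤ 1 + (1/a) · γ/(1 − γ)`,
where `γ^a` is the real power. -/
theorem one_div_one_sub_rpow_le (γ a : ℝ) (h0 : 0 ≤ γ) (h1 : γ < 1) (ha : 1 ≤ a) :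
    1 / (1 - γ ^ a) ≤ 1 + (1 / a) * (γ / (1 - γ)) := by
  have ha0 : 0 < a := by linarith
  rcases h0.eq_or_lt with rfl | hγ
  · simp [Real.zero_rpow ha0.ne']
  have hx1 : γ ^ a < 1 := Real.rpow_lt_one h0 h1 ha0
  have hx0 : 0 < γ ^ a := Real.rpow_pos_of_pos hγ a
  have hinv : 0 < γ⁻¹ := inv_pos.mpr hγ
  have hb := one_add_mul_self_le_rpow_one_add (s := γ⁻¹ - 1) (by linarith) ha
  rw [add_sub_cancel, Real.inv_rpow h0] at hb
  generalize γ ^ a = x at *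
  have key : a * x * (1 - γ) ≤ γ * (1 - x) := by
    have h := mul_le_mul_of_nonneg_right hb (mul_pos hx0 hγ).le
    have e1 : (1 + a * (γ⁻¹ - 1)) * (x * γ) = x * γ + a * x * (1 - γ) := by
      field_simp
    have e2 : x⁻¹ * (x * γ) = γ := by field_simp
    linarith
  have hx : 0 < 1 - x := by linarith
  have hg : 0 < 1 - γ := by linarith
  have e3 : 1 + (1 / a) * (γ / (1 - γ)) = (a * (1 - γ) + γ) / (a * (1 - γ)) := by
    field_simp
  rw [e3, div_le_div_iff₀ hx (mul_pos ha0 hg)]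
  linarith
end

section
/- Let f be the sequence A6519. For every real γ with 0 ≤ γ < 1, ∑_{k=1}^∞ γ^k · f(k) = ∑_{n=0}^∞ 2^n · γ^{2^n} / (1 − γ^{2^{n+1}}), and both series converge. -/
theorem padicValNat_two_pow_mul_odd (n m : ℕ) : padicValNat 2 (2 ^ n * (2 * m + 1)) = n := by
  rw [padicValNat.mul (by positivity) (by omega), padicValNat.prime_pow,
    padicValNat.eq_zero_of_not_dvd (by omega), add_zero]

theorem A6519_le_self {k : ℕ} (hk : k ≠ 0) : A6519 k ≤ k :=
  Nat.le_of_dvd (Nat.pos_of_ne_zero hk) pow_padicValNat_dvd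

/-- The bijection `(n, m) ↦ 2 ^ n * (2 * m + 1) - 1`. The shift by one makes it match series over
the positive integers indexed by `k + 1`; the truncated subtraction is exact. -/
noncomputable def oddPartEquiv : ℕ × ℕ ≃ ℕ :=
  Equiv.ofBijective (fun p => 2 ^ p.1 * (2 * p.2 + 1) - 1) <| by
    constructor
    · rintro ⟨n, m⟩ ⟨n', m'⟩ h
      have h₁ : 0 < 2 ^ n * (2 * m + 1) := by positivity
      have h₂ : 0 < 2 ^ n' * (2 * m' + 1) := by positivity
      have h₃ : 2 ^ n * (2 * m + 1) = 2 ^ n' * (2 * m' + 1) := by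
        simp only at h
        omega
      have hn : n = n' := by
        rw [← padicValNat_two_pow_mul_odd n m, h₃, padicValNat_two_pow_mul_odd]
      subst hn
      have := Nat.eq_of_mul_eq_mul_left (by positivity) h₃
      simp only [Prod.mk.injEq, true_and]
      omega
    · intro k
      obtain ⟨n, _, ⟨m, rfl⟩, h⟩ := Nat.exists_eq_two_pow_mul_odd (Nat.succ_ne_zero k)
      exact ⟨(n, m), by simp only [← h]; omega⟩

theorem oddPartEquiv_add_one (n m : ℕ) : oddPartEquiv (n, m) + 1 = 2 ^ n * (2 * m + 1) :=
  Nat.sub_add_cancel (Nat.succ_le_of_lt (by positivity))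

/-- For `0 ≤ γ < 1`, `∑_{k=1}^∞ γ^k · A6519 k = ∑_{n=0}^∞ 2^n · γ^{2^n} / (1 − γ^{2^{n+1}})`,
and both series converge. -/
theorem A6519_generating_regroup (γ : ℝ) (h0 : 0 ≤ γ) (h1 : γ < 1) :
    Summable (fun k : ℕ => γ ^ (k + 1) * (A6519 (k + 1) : ℝ)) ∧
    Summable (fun n : ℕ => (2 ^ n : ℝ) * γ ^ (2 ^ n) / (1 - γ ^ (2 ^ (n + 1)))) ∧
    ∑' k : ℕ, γ ^ (k + 1) * (A6519 (k + 1) : ℝ) =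
      ∑' n : ℕ, (2 ^ n : ℝ) * γ ^ (2 ^ n) / (1 - γ ^ (2 ^ (n + 1))) := by
  have hs : Summable (fun k : ℕ => γ ^ (k + 1) * (A6519 (k + 1) : ℝ)) := by
    have hg : Summable (fun k : ℕ => (k : ℝ) ^ 1 * γ ^ k) :=
      summable_pow_mul_geometric_of_norm_lt_one 1 (by rwa [Real.norm_of_nonneg h0])
    refine Summable.of_nonneg_of_le (fun k => by positivity) (fun k => ?_)
      ((summable_nat_add_iff 1).2 hg)
    rw [pow_one, mul_comm]
    gcongr
    exact A6519_le_self (Nat.succ_ne_zero k)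
  have inner (n : ℕ) : HasSum
      (fun m => γ ^ (oddPartEquiv (n, m) + 1) * (A6519 (oddPartEquiv (n, m) + 1) : ℝ))
      ((2 ^ n : ℝ) * γ ^ (2 ^ n) / (1 - γ ^ (2 ^ (n + 1)))) := by
    have hgeo := (hasSum_geometric_of_lt_one (pow_nonneg h0 (2 ^ (n + 1)))
      (pow_lt_one₀ h0 h1 (by positivity))).mul_left ((2 ^ n : ℝ) * γ ^ (2 ^ n))
    rw [← div_eq_mul_inv] at hgeo
    refine hgeo.congr_fun ?_
    intro m
    rw [oddPartEquiv_add_one, A6519, padicValNat_two_pow_mul_odd]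
    push_cast
    ring
  have key := ((oddPartEquiv.hasSum_iff).2 hs.hasSum).prod_fiberwise inner
  exact ⟨hs, key.summable, key.tsum_eq.symm⟩
end
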